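/- Let R be a commutative Noetherian ring with unity, I an ideal of R, and M an R-module with cohomological dimension cd(I,M) = c > 0. Then there exists an ideal J ⊊ I of R such that cd(J, M) = c − 1 and such that cd(J + Rx, M) = c for every element x ∈ I \ J. -/

import Mathlib

universe u

open CategoryTheory

/-- The cohomological dimension of `M` with respect to `I`:
`cd(I,M) = sup { i ∈ ℕ | H^i_I(M) ≠ 0 }`, as an element of `ℕ∞`. -/
noncomputable def cohomologicalDimension {R : Type u} [CommRing R] (I : Ideal R)
    (M : ModuleCat.{u} R) : ℕ∞ :=
  sSup {c : ℕ∞ | ∃ i : ℕ, c = i ∧ Nontrivial ((localCohomology I i).obj M)}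

open Limits Opposite

section ExtComparison

lemma CategoryTheory.comm_sq_comp_iso_inv {D : Type*} [Category* D] {E E' A A' H H' : D}
    {e : E ⟶ E'} {a : A ⟶ A'} {b : H ⟶ H'} {p : E ⟶ A} {p' : E' ⟶ A'} {h : H ≅ A} {h' : H' ≅ A'}
    (h₁ : e ≫ p' = p ≫ a) (h₂ : h.hom ≫ a = b ≫ h'.hom) :
    e ≫ (p' ≫ h'.inv) = (p ≫ h.inv) ≫ b := by
  rw [← Category.assoc, h₁, ← cancel_mono h'.hom]
  simp [← h₂]

variable {S : Type*} [Ring S] {C : Type*} [Category* C] [Abelian C] [Linear S C]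

/-- The cochain map `Hom(L, Y) ⟶ Hom(K, Y)` induced by a chain map `K ⟶ L`. -/
noncomputable def ChainComplex.linearYonedaMap {K L : ChainComplex C ℕ} (φ : K ⟶ L)
    (S : Type*) [Ring S] [Linear S C] (Y : C) :
    L.linearYonedaObj S Y ⟶ K.linearYonedaObj S Y :=
  (HomologicalComplex.unopFunctor _ _).map
    ((((linearYoneda S C).obj Y).rightOp.mapHomologicalComplex _).map φ).op

lemma ChainComplex.linearYonedaMap_f_apply {K L : ChainComplex C ℕ} (φ : K ⟶ L) (Y : C) (n : ℕ)
    (x : L.X n ⟶ Y) :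
    (ChainComplex.linearYonedaMap φ S Y).f n x = φ.f n ≫ x := rfl

variable [EnoughProjectives C]

lemma CategoryTheory.ProjectiveResolution.isoExt_hom_naturality {X X' : C} {f : X' ⟶ X}
    {P : ProjectiveResolution X} {P' : ProjectiveResolution X'}
    (φ : ProjectiveResolution.Hom P' P f) (n : ℕ) (Y : C) :
    ((Ext S C n).map f.op).app Y ≫ (P'.isoExt n Y).hom =
      (P.isoExt n Y).hom ≫
        HomologicalComplex.homologyMap (ChainComplex.linearYonedaMap φ.hom S Y) n := by
  have h1 := P'.isoLeftDerivedObj_inv_naturality f P φ.hom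
    (by simpa using φ.hom_f_zero_comp_π_f_zero) ((linearYoneda S C).obj Y).rightOp n
  have h2 := HomologicalComplex.homologyOp_hom_naturality
    (ChainComplex.linearYonedaMap φ.hom S Y) n
  exact comm_sq_comp_iso_inv
    (h := HomologicalComplex.homologyUnop
      ((((linearYoneda S C).obj Y).rightOp.mapHomologicalComplex _).obj P.complex) n)
    (h' := HomologicalComplex.homologyUnop
      ((((linearYoneda S C).obj Y).rightOp.mapHomologicalComplex _).obj P'.complex) n)
    (congrArg Quiver.Hom.unop h1) (congrArg Quiver.Hom.unop h2)

variable [HasExt C] {X Y : C} {n : ℕ}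

namespace CategoryTheory.ProjectiveResolution

/-- An element of the `Ext`-module computed by deriving `Hom(-, Y)` and a class in the `Ext`-group
of the derived category correspond to each other if they are represented by a common cocycle of a
projective resolution. -/
def ExtCorresp (P : ProjectiveResolution X)
    (a : ((Ext S C n).obj (op X)).obj Y) (α : Abelian.Ext X Y n) : Prop :=
  ∃ (x : P.complex.X n ⟶ Y) (hx : P.complex.d (n + 1) n ≫ x = 0)
    (z : (P.complex.linearYonedaObj S Y).cycles n),
    (P.complex.linearYonedaObj S Y).iCycles n z = x ∧
      (P.complex.linearYonedaObj S Y).homologyπ n z = (P.isoExt n Y).hom a ∧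
        P.extMk x (n + 1) rfl hx = α

lemma ExtCorresp.exists_right (P : ProjectiveResolution X)
    (a : ((Ext S C n).obj (op X)).obj Y) : ∃ α : Abelian.Ext X Y n, P.ExtCorresp a α := by
  obtain ⟨z, hz⟩ := (ModuleCat.epi_iff_surjective
    ((P.complex.linearYonedaObj S Y).homologyπ n)).1 inferInstance ((P.isoExt n Y).hom a)
  have hx : (P.complex.linearYonedaObj S Y).d n (n + 1)
      ((P.complex.linearYonedaObj S Y).iCycles n z) = 0 := by
    rw [← ModuleCat.comp_apply, HomologicalComplex.iCycles_d]
    rfl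
  exact ⟨_, _, hx, z, rfl, hz, rfl⟩

lemma ExtCorresp.exists_left (P : ProjectiveResolution X) (α : Abelian.Ext X Y n) :
    ∃ a : ((Ext S C n).obj (op X)).obj Y, P.ExtCorresp a α := by
  obtain ⟨x, hx, rfl⟩ := P.extMk_surjective α (n + 1) rfl
  have h := ShortComplex.exact_of_f_is_kernel (ShortComplex.mk _ _
    ((P.complex.linearYonedaObj S Y).iCycles_d n (n + 1)))
    ((P.complex.linearYonedaObj S Y).cyclesIsKernel n (n + 1) (by simp))
  obtain ⟨z, hz⟩ := (ShortComplex.moduleCat_exact_iff _).1 h x hx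
  exact ⟨(P.isoExt n Y).inv ((P.complex.linearYonedaObj S Y).homologyπ n z), x, hx, z, hz,
    by simp, rfl⟩

lemma ExtCorresp.eq_zero_iff {P : ProjectiveResolution X}
    {a : ((Ext S C (n + 1)).obj (op X)).obj Y} {α : Abelian.Ext X Y (n + 1)}
    (h : P.ExtCorresp a α) : a = 0 ↔ α = 0 := by
  obtain ⟨x, hx, z, hzx, hz, rfl⟩ := h
  rw [P.extMk_eq_zero_iff _ _ _ _ n rfl]
  have h0 : a = 0 ↔ (P.isoExt (n + 1) Y).hom a = 0 :=
    (P.isoExt (n + 1) Y).toLinearEquiv.map_eq_zero_iff.symm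
  rw [h0, ← hz]
  have hex := (ShortComplex.moduleCat_exact_iff _).1 (ShortComplex.exact_of_g_is_cokernel
    (ShortComplex.mk _ _ ((P.complex.linearYonedaObj S Y).toCycles_comp_homologyπ n (n + 1)))
    ((P.complex.linearYonedaObj S Y).homologyIsCokernel n (n + 1) (by simp)))
  have hi : ∀ g : (P.complex.linearYonedaObj S Y).X n,
      (P.complex.linearYonedaObj S Y).iCycles (n + 1)
        ((P.complex.linearYonedaObj S Y).toCycles n (n + 1) g) =
      (P.complex.linearYonedaObj S Y).d n (n + 1) g := fun g ↦
    ConcreteCategory.congr_hom ((P.complex.linearYonedaObj S Y).toCycles_i n (n + 1)) g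
  constructor
  · intro h
    obtain ⟨g, hg⟩ := hex z h
    exact ⟨g, (hi g).symm.trans ((congrArg _ hg).trans hzx)⟩
  · rintro ⟨g, hg⟩
    obtain rfl := (ModuleCat.mono_iff_injective
      ((P.complex.linearYonedaObj S Y).iCycles (n + 1))).1 inferInstance
      ((hi g).trans (hg.trans hzx.symm))
    exact ConcreteCategory.congr_hom
      ((P.complex.linearYonedaObj S Y).toCycles_comp_homologyπ n (n + 1)) g

lemma ExtCorresp.precomp {X' : C} {P : ProjectiveResolution X}
    {a : ((Ext S C n).obj (op X)).obj Y} {α : Abelian.Ext X Y n}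
    (h : P.ExtCorresp a α) (P' : ProjectiveResolution X') (f : X' ⟶ X) :
    P'.ExtCorresp (((Ext S C n).map f.op).app Y a)
      ((Abelian.Ext.mk₀ f).comp α (zero_add n)) := by
  obtain ⟨x, hx, z, hzx, hz, rfl⟩ := h
  let φ : ProjectiveResolution.Hom P' P f := ⟨lift f P' P, by simpa using lift_commutes_zero f P' P⟩
  refine ⟨φ.hom.f n ≫ x, by simp [← φ.hom.comm_assoc, hx],
    HomologicalComplex.cyclesMap (ChainComplex.linearYonedaMap φ.hom S Y) n z, ?_, ?_,
    (mk₀_comp_extMk _ _ _ _ φ).symm⟩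
  · rw [← ChainComplex.linearYonedaMap_f_apply (S := S), ← ModuleCat.comp_apply,
      HomologicalComplex.cyclesMap_i, ModuleCat.comp_apply, hzx]
  · rw [← ModuleCat.comp_apply, ← ModuleCat.comp_apply, isoExt_hom_naturality φ,
      ← HomologicalComplex.homologyπ_naturality, ModuleCat.comp_apply, ModuleCat.comp_apply, hz]

end CategoryTheory.ProjectiveResolution

end ExtComparison

section LocalCohomology

variable {R : Type u} [CommRing R]

/-- Multiplication by `r` as a morphism `R ⧸ A ⟶ R ⧸ B`, when `r A ⊆ B`. -/
noncomputable def quotientMul (A B : Ideal R) (r : R) (h : ∀ a ∈ A, r * a ∈ B) :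
    ModuleCat.of R (R ⧸ A) ⟶ ModuleCat.of R (R ⧸ B) :=
  ModuleCat.ofHom (Submodule.mapQ A B (LinearMap.lsmul R R r) h)

lemma quotientMul_comp {A B D : Ideal R} {r s t : R} (h : ∀ a ∈ A, r * a ∈ B)
    (h' : ∀ a ∈ B, s * a ∈ D) (h'' : ∀ a ∈ A, t * a ∈ D) (ht : r * s = t) :
    quotientMul A B r h ≫ quotientMul B D s h' = quotientMul A D t h'' := by
  subst ht
  ext
  change Submodule.Quotient.mk (s * (r * 1)) = Submodule.Quotient.mk (r * s * 1)
  congr 1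
  ring

/-- The restriction morphism `R ⧸ A ⟶ R ⧸ B` for ideals `A ≤ B`. -/
noncomputable def quotientMap {A B : Ideal R} (h : A ≤ B) :
    ModuleCat.of R (R ⧸ A) ⟶ ModuleCat.of R (R ⧸ B) :=
  quotientMul A B 1 (fun a ha ↦ by simpa using h ha)

lemma ringModIdeals_map_eq (J : Ideal R) {k m : ℕ} (h : k ≤ m) :
    (localCohomology.ringModIdeals (localCohomology.idealPowersDiagram J)).map
      (homOfLE h).op = quotientMap (Ideal.pow_le_pow_right h) := by
  ext x
  obtain ⟨x, rfl⟩ := Submodule.Quotient.mk_surjective _ x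
  change Submodule.Quotient.mk x = Submodule.Quotient.mk (1 * x)
  rw [one_mul]

lemma subsingleton_localCohomology_succ_iff (J : Ideal R) (n : ℕ) (M : ModuleCat.{u} R) :
    Subsingleton ((localCohomology J (n + 1)).obj M) ↔
      ∀ (k : ℕ) (α : Abelian.Ext (ModuleCat.of R (R ⧸ J ^ k)) M (n + 1)),
        ∃ (m : ℕ) (h : k ≤ m), (Abelian.Ext.mk₀
          (quotientMap (Ideal.pow_le_pow_right h : J ^ m ≤ J ^ k))).comp α (zero_add _) = 0 := by
  let F := localCohomology.diagram (localCohomology.idealPowersDiagram J) (n + 1)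
  let G := F ⋙ (evaluation _ _).obj M
  let c := ((evaluation _ _).obj M).mapCocone (colimit.cocone F)
  have hc : IsColimit c := isColimitOfPreserves _ (colimit.isColimit F)
  have := preservesFilteredColimitsOfSize_shrink.{0, u, 0, u} (forget (ModuleCat.{u} R))
  have key (k m : ℕ) (h : k ≤ m) (a : G.obj (op (op k)))
      (α : Abelian.Ext (ModuleCat.of R (R ⧸ J ^ k)) M (n + 1))
      (ha : (projectiveResolution (ModuleCat.of R (R ⧸ J ^ k))).ExtCorresp a α) :
      G.map (homOfLE h).op.op a = 0 ↔ (Abelian.Ext.mk₀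
          (quotientMap (Ideal.pow_le_pow_right h : J ^ m ≤ J ^ k))).comp α (zero_add _) = 0 := by
    rw [← ringModIdeals_map_eq]
    exact (ha.precomp (projectiveResolution (ModuleCat.of R (R ⧸ J ^ m))) _).eq_zero_iff
  change Subsingleton c.pt ↔ _
  constructor
  · intro hs k α
    obtain ⟨a, ha⟩ := ProjectiveResolution.ExtCorresp.exists_left (S := R)
      (projectiveResolution (ModuleCat.of R (R ⧸ J ^ k))) α
    obtain ⟨m, f, g, hfg⟩ := (Concrete.isColimit_rep_eq_iff_exists G hc
      (i := op (op k)) (j := op (op k)) a 0).1 (hs.elim _ _)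
    have h : k ≤ m.unop.unop := leOfHom f.unop.unop
    refine ⟨_, h, (key _ _ h a α ha).1 ?_⟩
    have : f = (homOfLE h).op.op := rfl
    rw [← this]
    exact hfg.trans (map_zero (G.map g).hom)
  · intro H
    refine subsingleton_of_forall_eq 0 fun y ↦ ?_
    obtain ⟨k, a, rfl⟩ := Concrete.isColimit_exists_rep G hc y
    obtain ⟨α, ha⟩ := ProjectiveResolution.ExtCorresp.exists_right (S := R)
      (projectiveResolution (ModuleCat.of R (R ⧸ J ^ k.unop.unop))) a
    obtain ⟨m, h, hm⟩ := H _ α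
    rw [← key _ _ h a α ha] at hm
    rw [← c.w (homOfLE h).op.op]
    exact (congrArg (c.ι.app _).hom hm).trans (map_zero _)

lemma quotientMap_comp {A B D : Ideal R} (h : A ≤ B) (h' : B ≤ D) :
    quotientMap h ≫ quotientMap h' = quotientMap (h.trans h') :=
  quotientMul_comp _ _ _ (one_mul 1)

lemma mk₀_quotientMap_comp {A B D : Ideal R} (h : A ≤ B) (h' : B ≤ D) {M : ModuleCat.{u} R} {n : ℕ}
    (α : Abelian.Ext (ModuleCat.of R (R ⧸ D)) M n) :
    (Abelian.Ext.mk₀ (quotientMap h)).comp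
      ((Abelian.Ext.mk₀ (quotientMap h')).comp α (zero_add n)) (zero_add n) =
        (Abelian.Ext.mk₀ (quotientMap (h.trans h'))).comp α (zero_add n) := by
  rw [Abelian.Ext.mk₀_comp_mk₀_assoc, quotientMap_comp]

/-- The complex `R ⧸ (A : r) ⟶ R ⧸ A ⟶ R ⧸ (A + Rr)`. -/
noncomputable def colonShortComplex (A : Ideal R) (r : R) : ShortComplex (ModuleCat.{u} R) where
  f := quotientMul (Submodule.comap (LinearMap.lsmul R R r) A) A r (fun _ ha ↦ ha)
  g := quotientMap (le_sup_left : A ≤ A ⊔ Ideal.span {r})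
  zero := by
    ext
    refine (Submodule.Quotient.mk_eq_zero _).2 ?_
    exact Ideal.mul_mem_left _ _ (Ideal.mul_mem_right _ _
      (Ideal.mem_sup_right (Ideal.mem_span_singleton_self r)))

lemma colonShortComplex_shortExact (A : Ideal R) (r : R) : (colonShortComplex A r).ShortExact where
  exact := by
    rw [ShortComplex.moduleCat_exact_iff]
    intro y hy
    obtain ⟨y, rfl⟩ := Submodule.Quotient.mk_surjective _ y
    replace hy : 1 * y ∈ A ⊔ Ideal.span {r} := (Submodule.Quotient.mk_eq_zero _).1 hy
    rw [one_mul] at hy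
    obtain ⟨a, ha, b, hb, rfl⟩ := Submodule.mem_sup.1 hy
    obtain ⟨t, rfl⟩ := Ideal.mem_span_singleton'.1 hb
    refine ⟨Submodule.Quotient.mk t, (Submodule.Quotient.eq _).2 ?_⟩
    have : r * t - (a + t * r) = -a := by ring
    exact this ▸ A.neg_mem ha
  mono_f := by
    rw [ModuleCat.mono_iff_injective]
    refine (injective_iff_map_eq_zero (colonShortComplex A r).f.hom).2 fun y hy ↦ ?_
    obtain ⟨y, rfl⟩ := Submodule.Quotient.mk_surjective _ y
    have hy' : r * y ∈ A := (Submodule.Quotient.mk_eq_zero A).1 hy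
    exact (Submodule.Quotient.mk_eq_zero _).2 hy'
  epi_g := by
    rw [ModuleCat.epi_iff_surjective]
    intro y
    obtain ⟨y, rfl⟩ := Submodule.Quotient.mk_surjective _ y
    exact ⟨Submodule.Quotient.mk y, congrArg Submodule.Quotient.mk (one_mul y)⟩

lemma exists_extClass_comp_eq (A : Ideal R) (r : R) {M : ModuleCat.{u} R} {n p : ℕ}
    (γ : Abelian.Ext (ModuleCat.of R (R ⧸ (A ⊔ Ideal.span {r}))) M p)
    (hγ : (Abelian.Ext.mk₀ (quotientMap (le_sup_left : A ≤ A ⊔ Ideal.span {r}))).comp γ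
      (zero_add p) = 0) (hp : 1 + n = p) :
    ∃ β : Abelian.Ext (ModuleCat.of R (R ⧸ Submodule.comap (LinearMap.lsmul R R r) A)) M n,
      (colonShortComplex_shortExact A r).extClass.comp β hp = γ :=
  Abelian.Ext.contravariant_sequence_exact₃ (colonShortComplex_shortExact A r) M γ hγ hp

lemma mul_mem_colon {A' A : Ideal R} (h : A' ≤ A) (r s : R) :
    ∀ a ∈ Submodule.comap (LinearMap.lsmul R R (r * s)) A',
      s * a ∈ Submodule.comap (LinearMap.lsmul R R r) A := fun a ha ↦ by
  have := h (Submodule.mem_comap.1 ha)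
  simpa [mul_assoc] using this

lemma sup_span_mul_le {A' A : Ideal R} (h : A' ≤ A) (r s : R) :
    A' ⊔ Ideal.span {r * s} ≤ A ⊔ Ideal.span {r} :=
  sup_le_sup h (Ideal.span_singleton_le_span_singleton.2 (dvd_mul_right r s))

/-- The morphism between the complexes `R ⧸ (A : r) ⟶ R ⧸ A ⟶ R ⧸ (A + Rr)` that is multiplication
by `s` on the first terms and restriction on the others. -/
noncomputable def colonShortComplexMap {A' A : Ideal R} (h : A' ≤ A) (r s : R) :
    colonShortComplex A' (r * s) ⟶ colonShortComplex A r where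
  τ₁ := quotientMul _ _ s (mul_mem_colon h r s)
  τ₂ := quotientMap h
  τ₃ := quotientMap (sup_span_mul_le h r s)
  comm₁₂ :=
    have h' : ∀ a ∈ Submodule.comap (LinearMap.lsmul R R (r * s)) A', r * s * a ∈ A :=
      fun _ ha ↦ h ha
    (quotientMul_comp (mul_mem_colon h r s) (fun _ ha ↦ ha) h' (mul_comm s r)).trans
      (quotientMul_comp (fun _ ha ↦ ha) (fun a ha ↦ by simpa using h ha) h'
        (mul_one (r * s))).symm
  comm₂₃ := (quotientMap_comp h le_sup_left).trans
    (quotientMap_comp le_sup_left (sup_span_mul_le h r s)).symm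

/-- A consequence of the Artin–Rees lemma. -/
lemma exists_pow_mul_mem_of_pow_mul_mem [IsNoetherianRing R] (J : Ideal R) (x : R) (k l m : ℕ) :
    ∃ s m' : ℕ, m ≤ m' ∧ ∀ a, x ^ k * x ^ s * a ∈ J ^ m' → x ^ s * a ∈ J ^ l := by
  let K : ℕ →o Ideal R :=
    { toFun := fun s ↦ LinearMap.ker (LinearMap.lsmul R R (x ^ s))
      monotone' := fun s t hst a ha ↦ by
        obtain ⟨d, rfl⟩ := Nat.exists_eq_add_of_le hst
        have : x ^ s * a = 0 := ha
        change x ^ (s + d) * a = 0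
        rw [pow_add, mul_right_comm, this, zero_mul] }
  obtain ⟨s, hs⟩ := monotone_stabilizes_iff_noetherian.2 (inferInstanceAs (IsNoetherian R R)) K
  obtain ⟨c, hc⟩ := J.exists_pow_inf_eq_pow_smul (Ideal.span {x ^ (s + k)})
  refine ⟨s, m + l + c, by omega, fun a ha ↦ ?_⟩
  rw [← pow_add, add_comm k s] at ha
  have hmem : x ^ (s + k) * a ∈ J ^ (m + l + c) • (⊤ : Ideal R) ⊓ Ideal.span {x ^ (s + k)} :=
    ⟨by simpa using ha, Ideal.mul_mem_right _ _ (Ideal.mem_span_singleton_self _)⟩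
  rw [hc _ (by omega)] at hmem
  have hmem' : x ^ (s + k) * a ∈ J ^ l * Ideal.span {x ^ (s + k)} :=
    Ideal.mul_mono (Ideal.pow_le_pow_right (by omega)) inf_le_right hmem
  obtain ⟨b, hb, hba⟩ := Ideal.mem_mul_span_singleton.1 hmem'
  have hker : a - b ∈ K (s + k) := by
    change x ^ (s + k) * (a - b) = 0
    rw [mul_sub, ← hba, mul_comm, sub_self]
  rw [← hs (s + k) (by omega)] at hker
  have : x ^ s * (a - b) = 0 := hker
  rw [mul_sub, sub_eq_zero] at this
  rw [this]
  exact Ideal.mul_mem_left _ _ hb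

lemma mk₀_comp_eq_zero_of_eq_comp {X Y Z M : ModuleCat.{u} R} {f : X ⟶ Z} {g : X ⟶ Y} {h : Y ⟶ Z}
    (hf : f = g ≫ h) {n : ℕ} {β : Abelian.Ext Z M n}
    (hβ : (Abelian.Ext.mk₀ h).comp β (zero_add n) = 0) :
    (Abelian.Ext.mk₀ f).comp β (zero_add n) = 0 := by
  rw [hf, ← Abelian.Ext.mk₀_comp_mk₀_assoc, hβ, Abelian.Ext.comp_zero]

lemma CategoryTheory.ShortComplex.ShortExact.mk₀_comp_extClass_comp_eq_zero
    {S T : ShortComplex (ModuleCat.{u} R)} (hS : S.ShortExact) (hT : T.ShortExact) (τ : S ⟶ T)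
    {M : ModuleCat.{u} R} {n p : ℕ} (β : Abelian.Ext T.X₁ M n) (hp : 1 + n = p)
    (h : (Abelian.Ext.mk₀ τ.τ₁).comp β (zero_add n) = 0) :
    (Abelian.Ext.mk₀ τ.τ₃).comp (hT.extClass.comp β hp) (zero_add p) = 0 := by
  rw [← Abelian.Ext.comp_assoc (Abelian.Ext.mk₀ τ.τ₃) _ β (zero_add 1) hp (by omega),
    ← ShortComplex.ShortExact.extClass_naturality hS hT τ,
    Abelian.Ext.comp_assoc _ _ β (add_zero 1) (zero_add _) (by omega), h, Abelian.Ext.comp_zero]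

/-- Enlarging the exponents kills the image of `β` under the connecting homomorphism, provided that
`β` vanishes on `R ⧸ J ^ l`. -/
lemma exists_mk₀_quotientMap_comp_extClass_comp_eq_zero [IsNoetherianRing R] (J : Ideal R) (x : R)
    {M : ModuleCat.{u} R} {n p : ℕ} (k l m : ℕ)
    (β : Abelian.Ext (colonShortComplex (J ^ m) (x ^ k)).X₁ M n) (hp : 1 + n = p)
    (hl : J ^ l ≤ Submodule.comap (LinearMap.lsmul R R (x ^ k)) (J ^ m))
    (hβ : (Abelian.Ext.mk₀ (quotientMap hl)).comp β (zero_add n) = 0) :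
    ∃ (s m' : ℕ) (h : J ^ m' ⊔ Ideal.span {x ^ k * x ^ s} ≤ J ^ m ⊔ Ideal.span {x ^ k}),
      (Abelian.Ext.mk₀ (quotientMap h)).comp
        ((colonShortComplex_shortExact (J ^ m) (x ^ k)).extClass.comp β hp) (zero_add p) = 0 := by
  obtain ⟨s, m', hm', hs⟩ := exists_pow_mul_mem_of_pow_mul_mem J x k l m
  have hle := Ideal.pow_le_pow_right hm' (I := J)
  refine ⟨s, m', sup_span_mul_le hle (x ^ k) (x ^ s), ?_⟩
  have hτ : (colonShortComplexMap hle (x ^ k) (x ^ s)).τ₁ =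
      quotientMul (Submodule.comap (LinearMap.lsmul R R (x ^ k * x ^ s)) (J ^ m')) (J ^ l)
        (x ^ s) hs ≫ quotientMap hl :=
    (quotientMul_comp hs _ (mul_mem_colon hle (x ^ k) (x ^ s)) (mul_one (x ^ s))).symm
  refine ShortComplex.ShortExact.mk₀_comp_extClass_comp_eq_zero
    (colonShortComplex_shortExact (J ^ m') (x ^ k * x ^ s)) _
    (colonShortComplexMap hle (x ^ k) (x ^ s)) β hp ?_
  exact mk₀_comp_eq_zero_of_eq_comp hτ hβ

lemma subsingleton_localCohomology_add_span_singleton [IsNoetherianRing R] (J : Ideal R) (x : R)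
    (n : ℕ) (M : ModuleCat.{u} R) (h₁ : Subsingleton ((localCohomology J (n + 1)).obj M))
    (h₂ : Subsingleton ((localCohomology J (n + 2)).obj M)) :
    Subsingleton ((localCohomology (J + Ideal.span {x}) (n + 2)).obj M) := by
  rw [subsingleton_localCohomology_succ_iff] at h₁ h₂ ⊢
  intro k α
  have hk : J ^ k ⊔ Ideal.span {x ^ k} ≤ (J + Ideal.span {x}) ^ k := by
    rw [← Ideal.span_singleton_pow]
    exact sup_le (Ideal.pow_right_mono le_sup_left k) (Ideal.pow_right_mono le_sup_right k)
  obtain ⟨m, hm, hα⟩ := h₂ k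
    ((Abelian.Ext.mk₀ (quotientMap (le_sup_left.trans hk))).comp α (zero_add _))
  have hJm : J ^ m ⊔ Ideal.span {x ^ k} ≤ (J + Ideal.span {x}) ^ k :=
    (sup_le_sup_right (Ideal.pow_le_pow_right hm) _).trans hk
  rw [mk₀_quotientMap_comp, ← mk₀_quotientMap_comp le_sup_left hJm] at hα
  obtain ⟨β, hβ⟩ := exists_extClass_comp_eq (J ^ m) (x ^ k) _ hα (add_comm 1 (n + 1))
  have hcolon : J ^ m ≤ Submodule.comap (LinearMap.lsmul R R (x ^ k)) (J ^ m) :=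
    fun a ha ↦ Ideal.mul_mem_left _ _ ha
  obtain ⟨l, hl, hβl⟩ := h₁ m ((Abelian.Ext.mk₀ (quotientMap hcolon)).comp β (zero_add _))
  rw [mk₀_quotientMap_comp] at hβl
  obtain ⟨s, m', hle, hs⟩ := exists_mk₀_quotientMap_comp_extClass_comp_eq_zero J x k l m β
    (add_comm 1 (n + 1)) _ hβl
  have hres : (Abelian.Ext.mk₀ (quotientMap (hle.trans hJm))).comp α (zero_add _) = 0 := by
    rw [← mk₀_quotientMap_comp hle hJm, ← hβ]
    exact hs
  have hN : (J + Ideal.span {x}) ^ (m' + (k + s)) ≤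
      J ^ m' ⊔ Ideal.span {x ^ k * x ^ s} := by
    rw [← pow_add, ← Ideal.span_singleton_pow]
    exact Ideal.sup_pow_add_le_pow_sup_pow
  refine ⟨k + (m' + (k + s)), by omega, ?_⟩
  have hN' := (Ideal.pow_le_pow_right (I := J + Ideal.span {x})
    (show m' + (k + s) ≤ k + (m' + (k + s)) by omega)).trans hN
  exact mk₀_comp_eq_zero_of_eq_comp (quotientMap_comp hN' (hle.trans hJm)).symm hres

lemma subsingleton_localCohomology_bot_succ (n : ℕ) (M : ModuleCat.{u} R) :
    Subsingleton ((localCohomology (⊥ : Ideal R) (n + 1)).obj M) := by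
  rw [subsingleton_localCohomology_succ_iff]
  intro k α
  refine ⟨k + 1, by omega, ?_⟩
  have : Module.Projective R (R ⧸ (⊥ : Ideal R) ^ (k + 1)) :=
    Module.Projective.of_equiv (Submodule.quotEquivOfEqBot _ (by simp)).symm
  have : Projective (ModuleCat.of R (R ⧸ (⊥ : Ideal R) ^ (k + 1))) :=
    (IsProjective.iff_projective _).1 this
  exact Abelian.Ext.eq_zero_of_projective _

end LocalCohomology

lemma cohomologicalDimension_le_iff {R : Type u} [CommRing R] (I : Ideal R) (M : ModuleCat.{u} R)
    (d : ℕ) : cohomologicalDimension I M ≤ d ↔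
      ∀ i, d < i → Subsingleton ((localCohomology I i).obj M) := by
  rw [cohomologicalDimension, sSup_le_iff]
  constructor
  · intro h i hi
    by_contra hn
    have := h i ⟨i, rfl, not_subsingleton_iff_nontrivial.1 hn⟩
    norm_cast at this
    omega
  · rintro h _ ⟨i, rfl, hi⟩
    by_contra hn
    exact not_subsingleton_iff_nontrivial.2 hi (h i (by exact_mod_cast not_le.1 hn))

lemma cohomologicalDimension_add_span_singleton_le {R : Type u} [CommRing R] [IsNoetherianRing R]
    (J : Ideal R) (x : R) (M : ModuleCat.{u} R) (d : ℕ) (h : cohomologicalDimension J M ≤ d) :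
    cohomologicalDimension (J + Ideal.span {x}) M ≤ (d + 1 : ℕ) := by
  rw [cohomologicalDimension_le_iff] at h ⊢
  intro i hi
  obtain ⟨n, rfl⟩ : ∃ n, i = n + 2 := ⟨i - 2, by omega⟩
  exact subsingleton_localCohomology_add_span_singleton J x n M (h _ (by omega)) (h _ (by omega))

/-- if `cd(I,M) = c > 0`, there exists an ideal `J ⊊ I` with `cd(J,M) = c - 1`
such that `cd(J + Rx, M) = c` for every `x ∈ I \ J`. -/
theorem exists_maximal_ideal_with_smaller_cohomological_dimension
    (R : Type u) [CommRing R] [IsNoetherianRing R] (I : Ideal R) (M : ModuleCat.{u} R)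
    (c : ℕ) (hc : 0 < c) (hcd : cohomologicalDimension I M = (c : ℕ∞)) :
    ∃ J : Ideal R, J < I ∧ cohomologicalDimension J M = ((c - 1 : ℕ) : ℕ∞) ∧
      ∀ x ∈ I, x ∉ J → cohomologicalDimension (J + Ideal.span {x}) M = (c : ℕ∞) := by
  obtain ⟨d, rfl⟩ : ∃ d, c = d + 1 := ⟨c - 1, by omega⟩
  rw [Nat.add_sub_cancel]
  obtain ⟨J, ⟨hJI, hJ⟩, hmax⟩ := set_has_maximal_iff_noetherian.2
    (inferInstanceAs (IsNoetherian R R))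
    {J : Ideal R | J ≤ I ∧ cohomologicalDimension J M ≤ d}
    ⟨⊥, bot_le, (cohomologicalDimension_le_iff _ _ _).2 fun i hi ↦ by
      obtain ⟨n, rfl⟩ : ∃ n, i = n + 1 := ⟨i - 1, by omega⟩
      exact subsingleton_localCohomology_bot_succ n M⟩
  have hlt : J < I := by
    refine lt_of_le_of_ne hJI ?_
    rintro rfl
    rw [hcd] at hJ
    norm_cast at hJ
    omega
  have hge : ∀ x ∈ I, x ∉ J → (d : ℕ∞) < cohomologicalDimension (J + Ideal.span {x}) M := by
    intro x hx hxJ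
    by_contra! hle
    refine hmax (J + Ideal.span {x})
      ⟨sup_le hJI ((Ideal.span_singleton_le_iff_mem I).2 hx), hle⟩ ?_
    refine lt_of_le_of_ne le_sup_left fun h ↦ hxJ ?_
    rw [h]
    exact Ideal.mem_sup_right (Ideal.mem_span_singleton_self x)
  refine ⟨J, hlt, le_antisymm hJ ?_, fun x hx hxJ ↦ le_antisymm
    (cohomologicalDimension_add_span_singleton_le J x M d hJ) ?_⟩
  · obtain ⟨x, hx, hxJ⟩ := SetLike.exists_of_lt hlt
    by_contra! hn
    obtain ⟨e, he⟩ := ENat.ne_top_iff_exists.1 hn.ne_top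
    rw [← he] at hn
    have hed : e + 1 ≤ d := by exact_mod_cast hn
    have h := (hge x hx hxJ).trans_le
      (cohomologicalDimension_add_span_singleton_le J x M e he.ge)
    norm_cast at h
    omega
  · push_cast
    exact Order.add_one_le_of_lt (hge x hx hxJ)
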